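/- For every natural number n ≥ 1, the Orchard crossing number of the complete bipartite graph K_{n,n} equals 4n·(n choose 3). -/

import Mathlib

/-!
Common definitions for the Orchard crossing number
(Feder–Garber, "The Orchard crossing number of an abstract graph").
-/

noncomputable section

/-- Points of the plane. -/
abbrev Pt : Type := ℝ × ℝ

/-- The line through two points of the plane. -/
def lineThrough (p q : Pt) : Set Pt := (affineSpan ℝ ({p, q} : Set Pt) : Set Pt)

/-- A line (or any set) `L` separates the points `P` and `Q` if both lie off `L`
and they lie in different connected components of the complement of `L`. -/
def Separates (L : Set Pt) (P Q : Pt) : Prop :=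
  P ∉ L ∧ Q ∉ L ∧ connectedComponentIn Lᶜ P ≠ connectedComponentIn Lᶜ Q

theorem Separates.symm {L : Set Pt} {P Q : Pt} (h : Separates L P Q) : Separates L Q P :=
  ⟨h.2.1, h.1, h.2.2.symm⟩

/-- A generic configuration: a finite set of points, no three of which are collinear. -/
def GenericConfig (S : Set Pt) : Prop :=
  S.Finite ∧ ∀ p ∈ S, ∀ q ∈ S, ∀ r ∈ S, p ≠ q → p ≠ r → q ≠ r →
    ¬ Collinear ℝ ({p, q, r} : Set Pt)

/-- A finite set of points is in convex position if every point of it is an extreme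
point of its convex hull, i.e. lies outside the convex hull of the other points. -/
def ConvexPosition (S : Set Pt) : Prop :=
  ∀ p ∈ S, p ∉ convexHull ℝ (S \ {p})

variable {V : Type*} [Fintype V] [DecidableEq V]

/-- A rectilinear drawing of a graph on vertex set `V`: an injective placement of the
vertices in the plane whose image is a generic configuration. -/
def IsRectDrawing (f : V → Pt) : Prop :=
  Function.Injective f ∧ GenericConfig (Set.range f)

/-- `sepCount f s t` is `n(s,t)`: the number of (unordered) pairs of vertices, both
different from `s` and `t`, whose drawn points span a line separating `f s` from `f t`. -/
def sepCount (f : V → Pt) (s t : V) : ℕ :=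
  Set.ncard {e : Finset V | ∃ a b : V, e = {a, b} ∧ a ≠ b ∧ s ∉ e ∧ t ∉ e ∧
    Separates (lineThrough (f a) (f b)) (f s) (f t)}

theorem sepCount_symm (f : V → Pt) (s t : V) : sepCount f s t = sepCount f t s := by
  unfold sepCount
  congr 1
  ext e
  constructor
  · rintro ⟨a, b, rfl, hab, hs, ht, hsep⟩
    exact ⟨a, b, rfl, hab, ht, hs, hsep.symm⟩
  · rintro ⟨a, b, rfl, hab, ht, hs, hsep⟩
    exact ⟨a, b, rfl, hab, hs, ht, hsep.symm⟩

/-- The crossing number `n(R(G))` of a drawing: the sum of `n(s,t)` over all edges. -/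
def drawingCrossings (G : SimpleGraph V) (f : V → Pt) : ℕ :=
  ∑ e ∈ G.edgeSet.toFinite.toFinset,
    Sym2.lift ⟨fun s t => sepCount f s t, fun s t => sepCount_symm f s t⟩ e

/-- The Orchard crossing number: the minimum of `n(R(G))` over all rectilinear drawings. -/
def OCN (G : SimpleGraph V) : ℕ :=
  sInf {n | ∃ f : V → Pt, IsRectDrawing f ∧ drawingCrossings G f = n}

/-- The maximal Orchard crossing number: the maximum of `n(R(G))` over all drawings. -/
def MOCN (G : SimpleGraph V) : ℕ :=
  sSup {n | ∃ f : V → Pt, IsRectDrawing f ∧ drawingCrossings G f = n}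

/-- The open segment drawn for an edge. -/
def edgeSeg (f : V → Pt) (e : Sym2 V) : Set Pt :=
  Sym2.lift ⟨fun a b => openSegment ℝ (f a) (f b), fun a b => openSegment_symm ℝ (f a) (f b)⟩ e

/-- The number of unordered pairs of distinct edges of `G` whose drawn open segments
intersect. -/
def crossPairs (G : SimpleGraph V) (f : V → Pt) : ℕ :=
  Set.ncard {p : Finset (Sym2 V) | ∃ e₁ e₂ : Sym2 V, p = {e₁, e₂} ∧ e₁ ≠ e₂ ∧
    e₁ ∈ G.edgeSet ∧ e₂ ∈ G.edgeSet ∧ (edgeSeg f e₁ ∩ edgeSeg f e₂).Nonempty}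

/-- The rectilinear crossing number: the minimum number of crossing pairs of edges
over all rectilinear drawings. -/
def rcr (G : SimpleGraph V) : ℕ :=
  sInf {n | ∃ f : V → Pt, IsRectDrawing f ∧ crossPairs G f = n}

/-- The number of 4-element subsets of the drawn points which are in convex position. -/
def convexFour (f : V → Pt) : ℕ :=
  Set.ncard {Q : Finset Pt | Q.card = 4 ∧ (Q : Set Pt) ⊆ Set.range f ∧
    ConvexPosition (Q : Set Pt)}

/-- The cyclic successor on `Fin n`. -/
def nextFin {n : ℕ} (i : Fin n) : Fin n :=
  ⟨(i.val + 1) % n, Nat.mod_lt _ (Nat.zero_lt_of_lt i.isLt)⟩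

/-- The star graph `K_{n,1}` on `n+1` vertices: the center `0` is joined to each of
the `n` outer vertices. -/
def starGraph (n : ℕ) : SimpleGraph (Fin (n + 1)) :=
  SimpleGraph.fromEdgeSet {e | ∃ i : Fin n, e = s((0 : Fin (n + 1)), i.succ)}

/-- The wheel graph `W_{n,1}` on `n+1` vertices: a cycle on the `n` outer vertices
together with a hub `0` joined to each of them. -/
def wheelGraph (n : ℕ) : SimpleGraph (Fin (n + 1)) :=
  SimpleGraph.fromEdgeSet
    ({e | ∃ i : Fin n, e = s((0 : Fin (n + 1)), i.succ)} ∪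
     {e | ∃ i : Fin n, e = s(i.succ, (nextFin i).succ)})

/-- The cycle graph `C_n` on the outer vertices `1, …, n` of `Fin (n+1)`, together
with the isolated vertex `0`. -/
def cycleWithIsolated (n : ℕ) : SimpleGraph (Fin (n + 1)) :=
  SimpleGraph.fromEdgeSet {e | ∃ i : Fin n, e = s(i.succ, (nextFin i).succ)}

/-- `HullCycle f` says that for every `i`, all the other drawn points lie (strictly) on
one side of the line through `f i` and `f (i+1)`; for an injective generic placement this
means the points are in convex position and occur around the convex hull exactly in the
cyclic order `f 0, f 1, …`. -/
def HullCycle {m : ℕ} (f : Fin m → Pt) : Prop :=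
  ∀ i j l : Fin m, j ≠ i → j ≠ nextFin i → l ≠ i → l ≠ nextFin i →
    ¬ Separates (lineThrough (f i) (f (nextFin i))) (f j) (f l)

end

/-!
Let `χ(a, b, s) ∈ {0, ±1}` be the orientation of the drawn triangle `a b s`. The line through `a`
and `b` separates `s` from `t` exactly when `χ(a, b, s) χ(a, b, t) = -1`, so weighted counts of
separated pairs become sums of squares of `∑ₛ w(s) χ(a, b, s)`. Comparing the constant weight with
the weight `±1` given by the two parts expresses the crossing number of a drawing of a complete
bipartite graph as a constant, minus `∑ (∑ₛ χ(a, b, s))²`, plus `∑ (∑ₛ ±χ(a, b, s))²`. Since `χ` is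
alternating, `∑ (∑ₛ χ(a, b, s))²` and the sum of the squares of the simplicial coboundary of `χ`
add up to a constant, so the crossing number is a constant plus a combination of squares. For
`K_{n,n}` the constant is the claimed value, and all squares vanish when the two parts alternate
along a parabola: there `χ` is a coboundary, and every line through two of the points has the same
colour imbalance on both sides.
-/

open Finset

section Orientation

/-- Twice the signed area of the triangle `p q r`, as an affine function of `r`. -/
noncomputable def orient (p q : Pt) : Pt →ᵃ[ℝ] ℝ where
  toFun r := (q.1 - p.1) * (r.2 - p.2) - (q.2 - p.2) * (r.1 - p.1)
  linear := (q.1 - p.1) • LinearMap.snd ℝ ℝ ℝ - (q.2 - p.2) • LinearMap.fst ℝ ℝ ℝ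
  map_vadd' r v := by
    simp only [vadd_eq_add, Prod.fst_add, Prod.snd_add, LinearMap.sub_apply, LinearMap.smul_apply,
      LinearMap.fst_apply, LinearMap.snd_apply, smul_eq_mul]
    ring

theorem orient_apply (p q r : Pt) :
    orient p q r = (q.1 - p.1) * (r.2 - p.2) - (q.2 - p.2) * (r.1 - p.1) :=
  rfl

theorem orient_swap_left (p q r : Pt) : orient q p r = -orient p q r := by
  simp only [orient_apply]
  ring

theorem orient_swap_right (p q r : Pt) : orient p r q = -orient p q r := by
  simp only [orient_apply]
  ring

@[simp]
theorem orient_self_left (p r : Pt) : orient p p r = 0 := by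
  simp [orient_apply]

@[simp]
theorem orient_left (p q : Pt) : orient p q p = 0 := by
  simp [orient_apply]

@[simp]
theorem orient_right (p q : Pt) : orient p q q = 0 := by
  rw [orient_swap_left, orient_left, neg_zero]

theorem mem_lineThrough_iff_orient_eq_zero {p q r : Pt} (hpq : p ≠ q) :
    r ∈ lineThrough p q ↔ orient p q r = 0 := by
  simp only [lineThrough, SetLike.mem_coe, mem_affineSpan_pair_iff_exists_lineMap_eq,
    AffineMap.lineMap_apply, vsub_eq_sub, vadd_eq_add, Prod.ext_iff, Prod.fst_add, Prod.snd_add,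
    Prod.smul_fst, Prod.smul_snd, Prod.fst_sub, Prod.snd_sub, smul_eq_mul, orient_apply]
  constructor
  · rintro ⟨c, h₁, h₂⟩
    rw [← h₁, ← h₂]
    ring
  · intro h
    have hnorm : (q.1 - p.1) ^ 2 + (q.2 - p.2) ^ 2 ≠ 0 := by
      contrapose! hpq
      ext <;> nlinarith [sq_nonneg (q.1 - p.1), sq_nonneg (q.2 - p.2)]
    -- The parameter of the orthogonal projection of `r` to the line.
    refine ⟨((r.1 - p.1) * (q.1 - p.1) + (r.2 - p.2) * (q.2 - p.2)) /
      ((q.1 - p.1) ^ 2 + (q.2 - p.2) ^ 2), ?_, ?_⟩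
    · field_simp
      linear_combination (q.2 - p.2) * h
    · field_simp
      linear_combination -(q.1 - p.1) * h

theorem collinear_iff_orient_eq_zero {p q r : Pt} (hpq : p ≠ q) :
    Collinear ℝ ({p, q, r} : Set Pt) ↔ orient p q r = 0 := by
  rw [← mem_lineThrough_iff_orient_eq_zero hpq]
  refine ⟨fun h => h.mem_affineSpan_of_mem_of_ne (by simp) (by simp) (by simp) hpq, fun h => ?_⟩
  have hins := collinear_insert_of_mem_affineSpan_pair h
  rwa [Set.insert_comm, Set.pair_comm] at hins

theorem separates_zeroLocus_iff (φ : Pt →ᵃ[ℝ] ℝ) {P Q : Pt} :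
    Separates {x | φ x = 0} P Q ↔ φ P * φ Q < 0 := by
  have hφ : Continuous φ := φ.continuous_of_finiteDimensional
  constructor
  · rintro ⟨hP, hQ, hne⟩
    by_contra! hPQ
    have hpos : 0 < φ P * φ Q := lt_of_le_of_ne hPQ (mul_ne_zero hP hQ).symm
    have hconvex : Convex ℝ {x | 0 < φ P * φ x} := (convex_Ioi 0).affine_preimage (φ P • φ)
    have hsub : {x | 0 < φ P * φ x} ⊆ {x | φ x = 0}ᶜ := fun x hx => right_ne_zero_of_mul hx.ne'
    exact hne (connectedComponentIn_eq
      (hconvex.isPreconnected.subset_connectedComponentIn (mul_self_pos.2 hP) hsub hpos))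
  · intro hPQ
    have hP : P ∈ {x | φ x = 0}ᶜ := left_ne_zero_of_mul hPQ.ne
    have hQ : Q ∈ {x | φ x = 0}ᶜ := right_ne_zero_of_mul hPQ.ne
    refine ⟨hP, hQ, fun heq => ?_⟩
    have hPC := mem_connectedComponentIn hP
    have hQC := heq ▸ mem_connectedComponentIn hQ
    obtain ⟨x, hx, hx0⟩ : (0 : ℝ) ∈ φ '' connectedComponentIn {x | φ x = 0}ᶜ P := by
      rcases mul_neg_iff.1 hPQ with ⟨hP0, hQ0⟩ | ⟨hP0, hQ0⟩
      · exact isPreconnected_connectedComponentIn.intermediate_value hQC hPC hφ.continuousOn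
          ⟨hQ0.le, hP0.le⟩
      · exact isPreconnected_connectedComponentIn.intermediate_value hPC hQC hφ.continuousOn
          ⟨hP0.le, hQ0.le⟩
    exact connectedComponentIn_subset _ _ hx hx0

theorem separates_lineThrough_iff {p q P Q : Pt} (hpq : p ≠ q) :
    Separates (lineThrough p q) P Q ↔ orient p q P * orient p q Q < 0 := by
  rw [← separates_zeroLocus_iff]
  congr! 1
  ext x
  exact mem_lineThrough_iff_orient_eq_zero hpq

end Orientation

section Coboundary

variable {V R : Type*} [CommRing R]

/-- The simplicial coboundary of a function of three vertices. -/
def coboundary (χ : V → V → V → R) (a b s t : V) : R :=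
  χ b s t - χ a s t + χ a b t - χ a b s

theorem coboundary_sq {χ : V → V → V → R} (hleft : ∀ a b s, χ b a s = -χ a b s)
    (hright : ∀ a b s, χ a s b = -χ a b s) (a b s t : V) :
    coboundary χ a b s t ^ 2 =
      χ a b s ^ 2 + χ a b t ^ 2 + χ a s t ^ 2 + χ b s t ^ 2 -
        2 * (χ a b s * χ a b t + χ a s b * χ a s t + χ a t b * χ a t s +
          χ b s a * χ b s t + χ b t a * χ b t s + χ s t a * χ s t b) := by
  have hcyclic (a b s : V) : χ b s a = χ a b s := by rw [hright, hleft, neg_neg]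
  rw [coboundary, hright a b s, hright a b t, hright a s t, hright b s t, hcyclic a b s,
    hcyclic a b t, hcyclic a s t, hcyclic b s t]
  ring

variable [Fintype V]

/-- The identity `‖δχ‖² + ‖∂χ‖² = N‖χ‖²` for the combinatorial Laplacian of a full simplex on `N`
vertices. -/
theorem sum_coboundary_sq_add {χ : V → V → V → R} (hleft : ∀ a b s, χ b a s = -χ a b s)
    (hright : ∀ a b s, χ a s b = -χ a b s) :
    ∑ a, ∑ b, ∑ s, ∑ t, coboundary χ a b s t ^ 2 + 12 * ∑ a, ∑ b, (∑ s, χ a b s) ^ 2 =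
      4 * Fintype.card V * ∑ a, ∑ b, ∑ s, χ a b s ^ 2 := by
  let S (F : V → V → V → V → R) : R := ∑ a, ∑ b, ∑ s, ∑ t, F a b s t
  have swap₁ (F) : S (fun a b s t => F b a s t) = S F := sum_comm
  have swap₂ (F) : S (fun a b s t => F a s b t) = S F := sum_congr rfl fun _ _ => sum_comm
  have swap₃ (F) : S (fun a b s t => F a b t s) = S F :=
    sum_congr rfl fun _ _ => sum_congr rfl fun _ _ => sum_comm
  have sq₁ : S (fun a b s _ => χ a b s ^ 2) = Fintype.card V * ∑ a, ∑ b, ∑ s, χ a b s ^ 2 := by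
    simp only [S, sum_const, card_univ, nsmul_eq_mul, mul_sum]
  have sq₂ : S (fun a b _ t => χ a b t ^ 2) = _ := (swap₃ _).trans sq₁
  have sq₃ : S (fun a _ s t => χ a s t ^ 2) = _ := (swap₂ _).trans sq₂
  have sq₄ : S (fun _ b s t => χ b s t ^ 2) = _ := (swap₁ _).trans sq₃
  have cross₁ : S (fun a b s t => χ a b s * χ a b t) = ∑ a, ∑ b, (∑ s, χ a b s) ^ 2 := by
    simp only [S, sq, sum_mul_sum]
  have cross₂ : S (fun a b s t => χ a s b * χ a s t) = _ := (swap₂ _).trans cross₁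
  have cross₃ : S (fun a b s t => χ a t b * χ a t s) = _ := (swap₃ _).trans cross₂
  have cross₄ : S (fun a b s t => χ b s a * χ b s t) = _ := (swap₁ _).trans cross₂
  have cross₅ : S (fun a b s t => χ b t a * χ b t s) = _ := (swap₁ _).trans cross₃
  have cross₆ : S (fun a b s t => χ s t a * χ s t b) = _ := (swap₂ _).trans cross₅
  simp only [coboundary_sq hleft hright, sum_sub_distrib, sum_add_distrib, ← mul_sum _ _ (2 : R)]
  simp only [S] at *
  rw [sq₁, sq₂, sq₃, sq₄, cross₁, cross₂, cross₃, cross₄, cross₅, cross₆]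
  ring

end Coboundary

section Sides

variable {V : Type*}

/-- The side of the line through `a` and `b` on which `s` lies in the drawing `f`: the sign of the
triangle `a b s`, which is `0` if two of the three vertices coincide. -/
noncomputable def side (f : V → Pt) (a b s : V) : ℤ :=
  (SignType.sign (orient (f a) (f b) (f s)) : ℤ)

theorem side_swap_left (f : V → Pt) (a b s : V) : side f b a s = -side f a b s := by
  simp [side, orient_swap_left (f a) (f b), Left.sign_neg]

theorem side_swap_right (f : V → Pt) (a b s : V) : side f a s b = -side f a b s := by
  simp [side, orient_swap_right (f a) (f b), Left.sign_neg]

theorem IsRectDrawing.orient_eq_zero_iff {f : V → Pt} (hf : IsRectDrawing f) {a b s : V} :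
    orient (f a) (f b) (f s) = 0 ↔ a = b ∨ s = a ∨ s = b := by
  constructor
  · contrapose!
    rintro ⟨hab, hsa, hsb⟩
    rw [Ne, ← collinear_iff_orient_eq_zero (hf.1.ne hab)]
    exact hf.2.2 _ ⟨a, rfl⟩ _ ⟨b, rfl⟩ _ ⟨s, rfl⟩ (hf.1.ne hab) (hf.1.ne hsa.symm)
      (hf.1.ne hsb.symm)
  · rintro (rfl | rfl | rfl) <;> simp

theorem IsRectDrawing.side_sq [DecidableEq V] {f : V → Pt} (hf : IsRectDrawing f) (a b s : V) :
    side f a b s ^ 2 = if a = b ∨ s = a ∨ s = b then 0 else 1 := by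
  rw [side, ← SignType.coe_pow]
  simp only [← hf.orient_eq_zero_iff]
  split_ifs with h
  · simp [h]
  · rcases lt_or_gt_of_ne h with h | h <;> simp [h]

variable [Fintype V]

theorem IsRectDrawing.sum_weight_mul_side_sq [DecidableEq V] {f : V → Pt} (hf : IsRectDrawing f)
    (w : V → ℤ) (a b : V) :
    ∑ s, w s * side f a b s ^ 2 = if a = b then 0 else ∑ s, w s - w a - w b := by
  split_ifs with hab
  · simp [hf.side_sq, hab]
  · have hterm (s : V) : w s * side f a b s ^ 2 =
        w s - (if s = a then w s else 0) - if s = b then w s else 0 := by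
      rw [hf.side_sq]
      grind
    simp [hterm, sum_sub_distrib]

theorem IsRectDrawing.sum_sum_weight_mul_side_sq_sq {f : V → Pt} (hf : IsRectDrawing f)
    (w : V → ℤ) :
    ∑ a, ∑ b, (∑ s, w s * side f a b s ^ 2) ^ 2 =
      (Fintype.card V - 2) * ((Fintype.card V - 3) * (∑ s, w s) ^ 2 + 2 * ∑ s, w s ^ 2) := by
  classical
  have hterm (a b : V) : (∑ s, w s * side f a b s ^ 2) ^ 2 =
      (∑ s, w s - w a - w b) ^ 2 - if a = b then (∑ s, w s - 2 * w a) ^ 2 else 0 := by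
    rw [hf.sum_weight_mul_side_sq]
    split_ifs with hab
    · rw [hab]
      ring
    · ring
  generalize hW : ∑ s, w s = W at *
  simp only [hterm, sum_sub_distrib, sum_ite_eq, mem_univ, if_true, sub_sq, mul_pow,
    sum_add_distrib, ← mul_sum, ← sum_mul, mul_sub, sub_mul, sum_const, card_univ, nsmul_eq_mul, hW]
  ring

theorem IsRectDrawing.sum_side_sq {f : V → Pt} (hf : IsRectDrawing f) :
    ∑ a, ∑ b, ∑ s, side f a b s ^ 2 =
      (Fintype.card V : ℤ) * (Fintype.card V - 1) * (Fintype.card V - 2) := by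
  classical
  have hterm (a b : V) : ∑ s, side f a b s ^ 2 =
      (Fintype.card V - 2) - if a = b then (Fintype.card V - 2 : ℤ) else 0 := by
    have h := hf.sum_weight_mul_side_sq 1 a b
    simp only [Pi.one_apply, one_mul, sum_const, card_univ, nsmul_eq_mul, mul_one] at h
    rw [h]
    split_ifs <;> ring
  simp only [hterm, sum_sub_distrib, sum_ite_eq, mem_univ, if_true, sum_const, card_univ,
    nsmul_eq_mul]
  ring

end Sides

section Counting

variable {V : Type*} [Fintype V] [DecidableEq V]

theorem two_mul_ncard_adj_pairs (G : SimpleGraph V) [DecidableRel G.Adj] :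
    2 * Set.ncard {e : Finset V | ∃ a b, e = {a, b} ∧ G.Adj a b} =
      ∑ a, ∑ b, if G.Adj a b then 1 else 0 := by
  have himage : {e : Finset V | ∃ a b, e = {a, b} ∧ G.Adj a b} = Sym2.toFinset '' G.edgeSet := by
    ext e
    simp [Sym2.exists, Sym2.toFinset_mk_eq, and_comm, eq_comm]
  have hinj : Function.Injective (Sym2.toFinset : Sym2 V → Finset V) := fun z w h =>
    Sym2.ext fun x => by rw [← Sym2.mem_toFinset, h, Sym2.mem_toFinset]
  rw [himage, Set.ncard_image_of_injective _ hinj, ← G.coe_edgeFinset, Set.ncard_coe_finset,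
    G.two_mul_card_edgeFinset, card_filter, Fintype.sum_prod_type]

theorem two_mul_ite_neg_eq_sign_sq_sub_sign (x : ℝ) :
    2 * (if x < 0 then 1 else 0) = (SignType.sign x : ℤ) ^ 2 - SignType.sign x := by
  rcases lt_trichotomy x 0 with h | h | h <;> simp [h, h.le]

theorem four_mul_sepCount {f : V → Pt} (hf : Function.Injective f) (s t : V) :
    4 * (sepCount f s t : ℤ) =
      ∑ a, ∑ b, ((side f a b s * side f a b t) ^ 2 - side f a b s * side f a b t) := by
  classical
  let G : SimpleGraph V :=
    { Adj a b := orient (f a) (f b) (f s) * orient (f a) (f b) (f t) < 0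
      symm := ⟨fun a b h => by simpa [orient_swap_left (f a) (f b)] using h⟩
      loopless := ⟨fun a h => by simp at h⟩ }
  have hcount : sepCount f s t = Set.ncard {e : Finset V | ∃ a b, e = {a, b} ∧ G.Adj a b} := by
    unfold sepCount
    congr 1
    ext e
    constructor
    · rintro ⟨a, b, he, hab, -, -, hsep⟩
      exact ⟨a, b, he, (separates_lineThrough_iff (hf.ne hab)).1 hsep⟩
    · rintro ⟨a, b, rfl, hadj⟩
      refine ⟨a, b, rfl, hadj.ne, ?_, ?_, (separates_lineThrough_iff (hf.ne hadj.ne)).2 hadj⟩ <;>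
      · simp only [mem_insert, mem_singleton]
        rintro (rfl | rfl) <;> simp [G] at hadj
  calc 4 * (sepCount f s t : ℤ)
      = 2 * ∑ a, ∑ b, if G.Adj a b then 1 else 0 := by
        have h := two_mul_ncard_adj_pairs G
        rw [← hcount] at h
        zify at h
        linarith
    _ = _ := by
        simp only [mul_sum, G, two_mul_ite_neg_eq_sign_sq_sub_sign, sign_mul, SignType.coe_mul,
          side]

theorem four_mul_sum_weight_mul_sepCount {f : V → Pt} (hf : Function.Injective f) (w : V → ℤ) :
    4 * ∑ s, ∑ t, w s * w t * (sepCount f s t : ℤ) =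
      ∑ a, ∑ b, (∑ s, w s * side f a b s ^ 2) ^ 2 - ∑ a, ∑ b, (∑ s, w s * side f a b s) ^ 2 := by
  calc 4 * ∑ s, ∑ t, w s * w t * (sepCount f s t : ℤ)
      = ∑ s, ∑ t, ∑ a, ∑ b,
          w s * w t * ((side f a b s * side f a b t) ^ 2 - side f a b s * side f a b t) := by
        simp only [mul_sum, mul_left_comm (4 : ℤ), four_mul_sepCount hf]
    _ = ∑ a, ∑ b, ∑ s, ∑ t,
          w s * w t * ((side f a b s * side f a b t) ^ 2 - side f a b s * side f a b t) := by
        rw [sum_comm_cycle]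
        exact sum_congr rfl fun _ _ => sum_comm_cycle
    _ = _ := by
        simp only [sq (∑ _, _), sum_mul_sum, ← sum_sub_distrib]
        congr! 4
        ring

end Counting

section CompleteBipartite

variable {α β : Type*}

/-- The two parts of `α ⊕ β`, recorded as signs. -/
def colour : α ⊕ β → ℤ :=
  Sum.elim 1 (-1)

theorem colour_sq (v : α ⊕ β) : colour v ^ 2 = 1 := by
  cases v <;> simp [colour]

variable [Fintype α] [Fintype β]

theorem sum_colour : ∑ v : α ⊕ β, colour v = Fintype.card α - Fintype.card β := by
  simp [colour, sub_eq_add_neg]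

theorem four_mul_sum_inl_inr (F : α ⊕ β → α ⊕ β → ℤ) (hF : ∀ s t, F s t = F t s) :
    4 * ∑ i, ∑ j, F (.inl i) (.inr j) =
      ∑ s, ∑ t, F s t - ∑ s, ∑ t, colour s * colour t * F s t := by
  have hcomm : ∑ j, ∑ i, F (.inr j) (.inl i) = ∑ i, ∑ j, F (.inl i) (.inr j) := by
    rw [sum_comm]
    simp only [hF]
  simp only [Fintype.sum_sum_type, colour, Sum.elim_inl, Sum.elim_inr, Pi.one_apply, Pi.neg_apply,
    sum_add_distrib, hcomm, one_mul, mul_one, neg_mul, mul_neg, sum_neg_distrib]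
  ring

variable [DecidableEq α] [DecidableEq β]

theorem drawingCrossings_completeBipartiteGraph (f : α ⊕ β → Pt) :
    drawingCrossings (completeBipartiteGraph α β) f = ∑ i, ∑ j, sepCount f (.inl i) (.inr j) := by
  unfold drawingCrossings
  rw [← Fintype.sum_prod_type' (f := fun i j => sepCount f (.inl i) (.inr j))]
  symm
  refine sum_bij (fun p _ => s(.inl p.1, .inr p.2)) ?mem ?inj ?surj ?value
  case mem => simp
  case inj =>
    rintro ⟨i, j⟩ - ⟨i', j'⟩ - h
    simpa using h
  case surj => rintro ⟨u | u, v | v⟩ <;> simp [Sym2.eq_swap]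
  case value => simp

theorem IsRectDrawing.drawingCrossings_completeBipartiteGraph_eq {f : α ⊕ β → Pt}
    (hf : IsRectDrawing f) {m n : ℕ} (hm : Fintype.card α = m) (hn : Fintype.card β = n) :
    192 * (drawingCrossings (completeBipartiteGraph α β) f : ℤ) =
      4 * (m + n - 2) * ((m + n - 3) * (2 * (m + n) * (m + n - 1) - 3 * (m - n) ^ 2) -
          6 * (m + n)) +
        ∑ a, ∑ b, ∑ s, ∑ t, coboundary (side f) a b s t ^ 2 +
        12 * ∑ a, ∑ b, (∑ s, colour s * side f a b s) ^ 2 := by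
  have hcard : (Fintype.card (α ⊕ β) : ℤ) = m + n := by
    rw [Fintype.card_sum, Nat.cast_add, hm, hn]
  have hcount : 4 * (drawingCrossings (completeBipartiteGraph α β) f : ℤ) =
      ∑ s, ∑ t, (sepCount f s t : ℤ) - ∑ s, ∑ t, colour s * colour t * (sepCount f s t : ℤ) := by
    rw [← four_mul_sum_inl_inr _ fun s t => by rw [sepCount_symm],
      drawingCrossings_completeBipartiteGraph]
    push_cast
    rfl
  have hall := four_mul_sum_weight_mul_sepCount hf.1 1
  have hbichromatic := four_mul_sum_weight_mul_sepCount hf.1 colour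
  have hhodge := sum_coboundary_sq_add (side_swap_left f) (side_swap_right f)
  rw [hf.sum_sum_weight_mul_side_sq_sq] at hall hbichromatic
  rw [hf.sum_side_sq] at hhodge
  simp only [Pi.one_apply, one_mul, one_pow, sum_const, card_univ, nsmul_eq_mul, mul_one, hcard]
    at hall hhodge
  simp only [sum_colour, colour_sq, sum_const, card_univ, nsmul_eq_mul, mul_one, hcard, hm, hn]
    at hbichromatic
  linear_combination 48 * hcount + 12 * hall - 12 * hbichromatic - hhodge

end CompleteBipartite

section Parabola

variable {V : Type*}

/-- The drawing that places each vertex `v` on the parabola `y = x²` above the abscissa `x v`. -/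
noncomputable def parabolaDrawing (x : V → ℝ) (v : V) : Pt :=
  (x v, x v ^ 2)

theorem orient_parabolaDrawing (x : V → ℝ) (a b s : V) :
    orient (parabolaDrawing x a) (parabolaDrawing x b) (parabolaDrawing x s) =
      (x b - x a) * (x s - x a) * (x s - x b) := by
  simp only [orient_apply, parabolaDrawing]
  ring

theorem sign_mul_sign_mul_sign (a b c : ℝ) :
    (SignType.sign ((b - a) * (c - a) * (c - b)) : ℤ) =
      SignType.sign (b - a) - SignType.sign (c - a) + SignType.sign (c - b) := by
  rcases lt_trichotomy a b with hab | hab | hab <;>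
    rcases lt_trichotomy a c with hac | hac | hac <;>
    rcases lt_trichotomy b c with hbc | hbc | hbc <;>
    first
    | (exfalso; linarith)
    | simp [sign_mul, hab, hac, hbc]

theorem side_parabolaDrawing (x : V → ℝ) (a b s : V) :
    side (parabolaDrawing x) a b s =
      SignType.sign (x b - x a) - SignType.sign (x s - x a) + SignType.sign (x s - x b) := by
  rw [side, orient_parabolaDrawing, sign_mul_sign_mul_sign]

theorem coboundary_side_parabolaDrawing (x : V → ℝ) (a b s t : V) :
    coboundary (side (parabolaDrawing x)) a b s t = 0 := by
  simp only [coboundary, side_parabolaDrawing]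
  ring

theorem isRectDrawing_parabolaDrawing [Finite V] {x : V → ℝ}
    (hx : Function.Injective x) : IsRectDrawing (parabolaDrawing x) := by
  refine ⟨fun a b h => hx (congrArg Prod.fst h), Set.finite_range _, ?_⟩
  rintro _ ⟨a, rfl⟩ _ ⟨b, rfl⟩ _ ⟨s, rfl⟩ hab has hbs
  rw [collinear_iff_orient_eq_zero hab, orient_parabolaDrawing]
  have hne {u v : V} (h : parabolaDrawing x u ≠ parabolaDrawing x v) : x v - x u ≠ 0 :=
    sub_ne_zero.2 (hx.ne (ne_of_apply_ne _ h)).symm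
  exact mul_ne_zero (mul_ne_zero (hne hab) (hne has)) (hne hbs)

end Parabola

theorem sum_range_two_mul {M : Type*} [AddCommMonoid M] (F : ℕ → M) (n : ℕ) :
    ∑ k ∈ range (2 * n), F k = ∑ i ∈ range n, F (2 * i) + ∑ i ∈ range n, F (2 * i + 1) := by
  induction n with
  | zero => simp
  | succ n ih =>
    rw [mul_add_one, sum_range_succ, sum_range_succ, ih, sum_range_succ, sum_range_succ, add_assoc,
      add_add_add_comm]

section Alternating

variable {n : ℕ}

/-- The position of a vertex of `K_{n,n}` in the order in which the two parts alternate. -/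
def alternatingPosition : Fin n ⊕ Fin n → ℕ :=
  Sum.elim (fun i => 2 * i) (fun j => 2 * j + 1)

theorem alternatingPosition_injective : Function.Injective (alternatingPosition (n := n)) := by
  rintro (a | a) (b | b) h <;> simp only [alternatingPosition, Sum.elim_inl, Sum.elim_inr] at h <;>
    grind

theorem alternatingPosition_lt (v : Fin n ⊕ Fin n) : alternatingPosition v < 2 * n := by
  cases v <;> simp only [alternatingPosition, Sum.elim_inl, Sum.elim_inr] <;> omega

theorem sum_colour_mul_alternatingPosition (F : ℕ → ℤ) :
    ∑ v : Fin n ⊕ Fin n, colour v * F (alternatingPosition v) =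
      ∑ k ∈ range (2 * n), (-1) ^ k * F k := by
  rw [sum_range_two_mul, ← Fin.sum_univ_eq_sum_range (fun i => (-1) ^ (2 * i) * F (2 * i)),
    ← Fin.sum_univ_eq_sum_range (fun i => (-1) ^ (2 * i + 1) * F (2 * i + 1))]
  simp [colour, alternatingPosition, pow_succ]

theorem two_mul_sign_cast_sub (k a : ℕ) :
    2 * (SignType.sign ((k : ℝ) - a) : ℤ) =
      (if k ≤ a then -1 else 1) + if k + 1 ≤ a then -1 else 1 := by
  rcases lt_trichotomy k a with h | h | h
  · simp [h, h.le, Nat.succ_le_of_lt h]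
  · simp [h]
  · simp [h, h.not_ge, (h.trans (Nat.lt_succ_self k)).not_ge]

theorem sum_neg_one_pow_mul_sign_cast_sub {a m : ℕ} (hm : Even m) (ham : a < m) :
    ∑ k ∈ range m, (-1) ^ k * (SignType.sign ((k : ℝ) - a) : ℤ) = -1 := by
  let F (k : ℕ) : ℤ := (-1) ^ k * if k ≤ a then -1 else 1
  have htelescope : 2 * ∑ k ∈ range m, (-1) ^ k * (SignType.sign ((k : ℝ) - a) : ℤ) =
      F 0 - F m := by
    rw [← sum_range_sub', mul_sum]
    refine sum_congr rfl fun k _ => ?_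
    rw [mul_left_comm, two_mul_sign_cast_sub]
    simp only [F, pow_succ]
    ring
  have hstart : F 0 = -1 := by simp [F]
  have hend : F m = 1 := by simp [F, hm.neg_one_pow, ham.not_ge]
  linarith

/-- The drawing of `K_{n,n}` whose two parts alternate along a parabola. -/
noncomputable def alternatingDrawing : Fin n ⊕ Fin n → Pt :=
  parabolaDrawing fun v => (alternatingPosition v : ℝ)

theorem isRectDrawing_alternatingDrawing : IsRectDrawing (alternatingDrawing (n := n)) :=
  isRectDrawing_parabolaDrawing (Nat.cast_injective.comp alternatingPosition_injective)

theorem coboundary_side_alternatingDrawing (a b s t : Fin n ⊕ Fin n) :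
    coboundary (side alternatingDrawing) a b s t = 0 :=
  coboundary_side_parabolaDrawing _ a b s t

theorem sum_colour_mul_side_alternatingDrawing (a b : Fin n ⊕ Fin n) :
    ∑ s, colour s * side alternatingDrawing a b s = 0 := by
  have hsum (v : Fin n ⊕ Fin n) : ∑ s : Fin n ⊕ Fin n, colour s *
      (SignType.sign ((alternatingPosition s : ℝ) - alternatingPosition v) : ℤ) = -1 := by
    rw [sum_colour_mul_alternatingPosition fun k =>
      (SignType.sign ((k : ℝ) - alternatingPosition v) : ℤ)]
    exact sum_neg_one_pow_mul_sign_cast_sub (even_two_mul n) (alternatingPosition_lt v)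
  simp only [alternatingDrawing, side_parabolaDrawing, mul_add, mul_sub, sum_add_distrib,
    sum_sub_distrib, hsum, ← sum_mul, sum_colour]
  ring

end Alternating

section Balanced

theorem six_mul_choose_three (n : ℕ) : 6 * (n.choose 3 : ℤ) = n * (n - 1) * (n - 2) := by
  have h := Nat.descFactorial_eq_factorial_mul_choose n 3
  rw [show Nat.factorial 3 = 6 from rfl] at h
  rw [← Nat.cast_ofNat, ← Nat.cast_mul, ← h, ← descPochhammer_eval_eq_descFactorial]
  simp [descPochhammer_succ_right]

variable {α β : Type*} [Fintype α] [Fintype β] [DecidableEq α] [DecidableEq β] {n : ℕ}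

theorem IsRectDrawing.drawingCrossings_completeBipartiteGraph_eq_of_card_eq {f : α ⊕ β → Pt}
    (hf : IsRectDrawing f) (hα : Fintype.card α = n) (hβ : Fintype.card β = n) :
    192 * (drawingCrossings (completeBipartiteGraph α β) f : ℤ) =
      192 * (4 * n * n.choose 3) +
        ∑ a, ∑ b, ∑ s, ∑ t, coboundary (side f) a b s t ^ 2 +
        12 * ∑ a, ∑ b, (∑ s, colour s * side f a b s) ^ 2 := by
  rw [hf.drawingCrossings_completeBipartiteGraph_eq hα hβ]
  linear_combination -128 * (n : ℤ) * six_mul_choose_three n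

theorem IsRectDrawing.le_drawingCrossings_completeBipartiteGraph {f : α ⊕ β → Pt}
    (hf : IsRectDrawing f) (hα : Fintype.card α = n) (hβ : Fintype.card β = n) :
    4 * n * n.choose 3 ≤ drawingCrossings (completeBipartiteGraph α β) f := by
  have hcoboundary : 0 ≤ ∑ a, ∑ b, ∑ s, ∑ t, coboundary (side f) a b s t ^ 2 := by positivity
  have hcolour : 0 ≤ ∑ a, ∑ b, (∑ s, colour s * side f a b s) ^ 2 := by positivity
  zify
  linarith [hf.drawingCrossings_completeBipartiteGraph_eq_of_card_eq hα hβ]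

theorem drawingCrossings_alternatingDrawing :
    drawingCrossings (completeBipartiteGraph (Fin n) (Fin n)) alternatingDrawing =
      4 * n * n.choose 3 := by
  have hdrawing : IsRectDrawing (alternatingDrawing (n := n)) := isRectDrawing_alternatingDrawing
  have h := hdrawing.drawingCrossings_completeBipartiteGraph_eq_of_card_eq (Fintype.card_fin n)
    (Fintype.card_fin n)
  simp only [coboundary_side_alternatingDrawing, sum_colour_mul_side_alternatingDrawing,
    zero_pow two_ne_zero, sum_const_zero, mul_zero, add_zero] at h
  exact_mod_cast mul_left_cancel₀ (by norm_num) h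

end Balanced

/-- For n ≥ 1, `OCN(K_{n,n}) = 4n * C(n,3)`. -/
theorem stmt_10 (n : ℕ) (hn : 1 ≤ n) :
    OCN (completeBipartiteGraph (Fin n) (Fin n)) = 4 * n * Nat.choose n 3 := by
  apply le_antisymm
  · exact Nat.sInf_le ⟨alternatingDrawing, isRectDrawing_alternatingDrawing,
      drawingCrossings_alternatingDrawing⟩
  · refine le_csInf ⟨_, alternatingDrawing, isRectDrawing_alternatingDrawing, rfl⟩ ?_
    rintro _ ⟨f, hf, rfl⟩
    exact hf.le_drawingCrossings_completeBipartiteGraph (Fintype.card_fin n) (Fintype.card_fin n)
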